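/- A braid β ∈ B_∞ belongs to the image of the shift endomorphism sh if and only if sh(β) commutes with σ₁, i.e. sh(β) · σ₁ = σ₁ · sh(β). -/

import Mathlib

/-- The braid relations on generators indexed by `ℕ` (generator `i` stands for
the Artin generator `σ_{i+1}` of the paper). -/
def braidRels : Set (FreeGroup ℕ) :=
  {r | (∃ i j : ℕ, i + 2 ≤ j ∧
          r = .of i * .of j * (.of i)⁻¹ * (.of j)⁻¹) ∨
       (∃ i : ℕ,
          r = .of i * .of (i + 1) * .of i *
              (.of (i + 1) * .of i * .of (i + 1))⁻¹)}

/-- The braid group on infinitely many strands. -/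
abbrev Binf : Type := PresentedGroup braidRels

/-- `σ i` is the Artin generator `σ_{i+1}` of the paper (0-indexed). -/
def σ (i : ℕ) : Binf := PresentedGroup.of i

lemma mk_rel_eq_one {r : FreeGroup ℕ} (h : r ∈ braidRels) :
    PresentedGroup.mk braidRels r = 1 :=
  (QuotientGroup.eq_one_iff r).mpr (Subgroup.subset_normalClosure h)

lemma shift_lift_eq_one :
    ∀ r ∈ braidRels, FreeGroup.lift (fun n => σ (n + 1)) r = 1 := by
  intro r hr
  have key : ∀ s ∈ braidRels, FreeGroup.lift (fun n => σ (n + 1)) s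
      = PresentedGroup.mk braidRels (FreeGroup.map (· + 1) s) := by
    intro s _
    have : (FreeGroup.lift (fun n => σ (n + 1)) : FreeGroup ℕ →* Binf)
        = (PresentedGroup.mk braidRels).comp (FreeGroup.map (· + 1)) := by
      apply FreeGroup.ext_hom
      intro x
      simp [σ, PresentedGroup.of]
    rw [this]; rfl
  rw [key r hr]
  apply mk_rel_eq_one
  rcases hr with ⟨i, j, hij, rfl⟩ | ⟨i, rfl⟩
  · exact Or.inl ⟨i + 1, j + 1, by omega, by simp⟩
  · exact Or.inr ⟨i + 1, by simp⟩

/-- The shift endomorphism of the braid group, mapping `σ i` to `σ (i+1)`. -/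
def sh : Binf →* Binf := PresentedGroup.toGroup shift_lift_eq_one

@[simp] lemma sh_σ (i : ℕ) : sh (σ i) = σ (i + 1) :=
  PresentedGroup.toGroup.of shift_lift_eq_one

/-- The shifted-conjugation (selfdistributive) operation on `Binf`:
`β₁ ▷ β₂ = β₁ · sh β₂ · σ₁ · (sh β₁)⁻¹`. -/
def sc (β₁ β₂ : Binf) : Binf := β₁ * sh β₂ * σ 0 * (sh β₁)⁻¹

/-! Deleting the strand that starts at a given position of a braid is a cocycle, so it makes `Binf`
act on `ℕ × Binf`: a braid sends `(p, b)` to `(q, γ * b)`, where `q` is the final position of its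
strand starting at `p` and `γ` is what remains once this strand is deleted. Deleting the first
strand of `sh β` leaves `β`, and deleting the second one leaves `sh γ`, where `γ` is `β` without its
first strand. Since `σ 0` swaps these two strands, deleting the first strand on both sides of
`sh β * σ 0 = σ 0 * sh β` gives `sh γ = β`. -/

open Equiv Function

theorem σ_comm {i j : ℕ} (h : i + 2 ≤ j) : σ i * σ j = σ j * σ i := by
  have hrel := mk_rel_eq_one (Or.inl ⟨i, j, h, rfl⟩)
  rwa [map_mul, map_mul, map_mul, map_inv, map_inv, mul_inv_eq_one, mul_inv_eq_iff_eq_mul] at hrel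

theorem σ_braid (i : ℕ) : σ i * σ (i + 1) * σ i = σ (i + 1) * σ i * σ (i + 1) := by
  have hrel := mk_rel_eq_one (Or.inr ⟨i, rfl⟩)
  rwa [map_mul, map_inv, mul_inv_eq_one] at hrel

theorem commute_sh_sh_σ_zero (β : Binf) : Commute (sh (sh β)) (σ 0) := by
  have hconj : (MulAut.conj (σ 0)).toMonoidHom.comp (sh.comp sh) = sh.comp sh := by
    ext i
    change σ 0 * sh (sh (σ i)) * (σ 0)⁻¹ = sh (sh (σ i))
    rw [sh_σ, sh_σ, σ_comm (by omega), mul_inv_cancel_right]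
  exact (mul_inv_eq_iff_eq_mul.mp (DFunLike.congr_fun hconj β)).symm

theorem semiconj_of_closure_eq_top {G X Y : Type*} [Group G] {S : Set G}
    (hS : Subgroup.closure S = ⊤) {φ : G →* Perm X} {ψ : G →* Perm Y} {f : X → Y}
    (hf : ∀ g ∈ S, Semiconj f (φ g) (ψ g)) (g : G) : Semiconj f (φ g) (ψ g) := by
  have hg : g ∈ Subgroup.closure S := hS ▸ Subgroup.mem_top g
  induction hg using Subgroup.closure_induction with
  | mem g hg => exact hf g hg
  | one =>
    rw [map_one, map_one]
    exact Semiconj.id_right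
  | mul g h _ _ hg hh =>
    rw [map_mul, map_mul]
    exact hg.comp_right hh
  | inv g _ hg =>
    rw [map_inv, map_inv]
    exact hg.inverses_right (φ g).apply_symm_apply (ψ g).symm_apply_apply

/-- The braid obtained from `σ i` by deleting its strand starting at position `p`. Here `σ i`
crosses the strands at positions `i` and `i + 1`, positions being counted from `0`. -/
def deleteStrand (i p : ℕ) : Binf :=
  if p < i then σ (i - 1) else if p ≤ i + 1 then 1 else σ i

/-- The action of `σ i` on pairs `(p, b)`: it moves the strand at position `p`, and multiplies `b`
by what remains of `σ i` once this strand is deleted. -/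
def strandPerm (i : ℕ) : Perm (ℕ × Binf) :=
  (swap i (i + 1)).prodShear fun p => Equiv.mulLeft (deleteStrand i p)

theorem strandPerm_apply (i p : ℕ) (b : Binf) :
    strandPerm i (p, b) = (swap i (i + 1) p, deleteStrand i p * b) :=
  rfl

theorem strandPerm_of_lt {i p : ℕ} (h : p < i) (b : Binf) :
    strandPerm i (p, b) = (p, σ (i - 1) * b) := by
  rw [strandPerm_apply, swap_apply_of_ne_of_ne (by omega) (by omega), deleteStrand, if_pos h]

theorem strandPerm_of_gt {i p : ℕ} (h : i + 1 < p) (b : Binf) :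
    strandPerm i (p, b) = (p, σ i * b) := by
  rw [strandPerm_apply, swap_apply_of_ne_of_ne (by omega) (by omega), deleteStrand,
    if_neg (by omega), if_neg (by omega)]

@[simp] theorem strandPerm_left (i : ℕ) (b : Binf) : strandPerm i (i, b) = (i + 1, b) := by
  simp [strandPerm_apply, deleteStrand]

@[simp] theorem strandPerm_right (i : ℕ) (b : Binf) : strandPerm i (i + 1, b) = (i, b) := by
  simp [strandPerm_apply, deleteStrand]

theorem strandPerm_comm {i j : ℕ} (h : i + 2 ≤ j) :
    strandPerm i * strandPerm j = strandPerm j * strandPerm i := by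
  ext1 ⟨p, b⟩
  simp only [Perm.mul_apply]
  obtain hp | rfl | rfl | hp : p < i ∨ p = i ∨ p = i + 1 ∨ i + 1 < p := by omega
  · have hσ := σ_comm (i := i - 1) (j := j - 1) (by omega)
    simp (disch := omega) only [strandPerm_of_lt, ← mul_assoc, hσ]
  · simp (disch := omega) only [strandPerm_of_lt, strandPerm_left]
  · simp (disch := omega) only [strandPerm_of_lt, strandPerm_right]
  obtain hp' | rfl | rfl | hp' : p < j ∨ p = j ∨ p = j + 1 ∨ j + 1 < p := by omega
  · have hσ := σ_comm (i := i) (j := j - 1) (by omega)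
    simp (disch := omega) only [strandPerm_of_lt, strandPerm_of_gt, ← mul_assoc, hσ]
  · simp (disch := omega) only [strandPerm_of_gt, strandPerm_left]
  · simp (disch := omega) only [strandPerm_of_gt, strandPerm_right]
  · simp (disch := omega) only [strandPerm_of_gt, ← mul_assoc, σ_comm h]

theorem strandPerm_braid (i : ℕ) :
    strandPerm i * strandPerm (i + 1) * strandPerm i =
      strandPerm (i + 1) * strandPerm i * strandPerm (i + 1) := by
  ext1 ⟨p, b⟩
  simp only [Perm.mul_apply]
  obtain hp | rfl | rfl | rfl | hp :
      p < i ∨ p = i ∨ p = i + 1 ∨ p = i + 1 + 1 ∨ i + 1 + 1 < p := by omega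
  · obtain ⟨k, rfl⟩ : ∃ k, i = k + 1 := ⟨i - 1, by omega⟩
    simp (disch := omega) only [strandPerm_of_lt, Nat.add_sub_cancel, ← mul_assoc, σ_braid]
  · simp (disch := omega) only [strandPerm_of_lt, strandPerm_of_gt, strandPerm_left,
      Nat.add_sub_cancel]
  · simp (disch := omega) only [strandPerm_of_lt, strandPerm_of_gt, strandPerm_left,
      strandPerm_right, Nat.add_sub_cancel]
  · simp (disch := omega) only [strandPerm_of_lt, strandPerm_of_gt, strandPerm_right,
      Nat.add_sub_cancel]
  · simp (disch := omega) only [strandPerm_of_gt, ← mul_assoc, σ_braid]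

theorem lift_strandPerm_eq_one : ∀ r ∈ braidRels, FreeGroup.lift strandPerm r = 1 := by
  rintro _ (⟨i, j, h, rfl⟩ | ⟨i, rfl⟩)
  · simp only [map_mul, map_inv, FreeGroup.lift_apply_of]
    rw [mul_inv_eq_one, mul_inv_eq_iff_eq_mul, strandPerm_comm h]
  · simp only [map_mul, map_inv, FreeGroup.lift_apply_of]
    rw [mul_inv_eq_one, strandPerm_braid]

/-- The action of braids on pairs `(p, b)`: a braid moves the strand at position `p`, and multiplies
`b` on the left by what remains of the braid once this strand is deleted. -/
def strandAction : Binf →* Perm (ℕ × Binf) :=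
  PresentedGroup.toGroup lift_strandPerm_eq_one

@[simp] theorem strandAction_σ (i : ℕ) : strandAction (σ i) = strandPerm i :=
  PresentedGroup.toGroup.of lift_strandPerm_eq_one

theorem strandAction_sh_zero (β b : Binf) : strandAction (sh β) (0, b) = (0, β * b) := by
  have hsemi : Semiconj (Prod.mk 0) (MulAction.toPermHom Binf Binf β)
      (strandAction.comp sh β) := by
    refine semiconj_of_closure_eq_top (PresentedGroup.closure_range_of braidRels) ?_ β
    rintro _ ⟨i, rfl⟩ b
    change (0, σ i * b) = strandAction (sh (σ i)) (0, b)
    rw [sh_σ, strandAction_σ, strandPerm_of_lt (by omega), Nat.add_sub_cancel]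
  exact (hsemi b).symm

theorem strandPerm_succ (i : ℕ) (x : ℕ × Binf) :
    strandPerm (i + 1) (x.map (· + 1) sh) = (strandPerm i x).map (· + 1) sh := by
  obtain ⟨p, b⟩ := x
  simp only [Prod.map_apply]
  obtain hp | rfl | rfl | hp : p < i ∨ p = i ∨ p = i + 1 ∨ i + 1 < p := by omega
  · obtain ⟨k, rfl⟩ : ∃ k, i = k + 1 := ⟨i - 1, by omega⟩
    simp (disch := omega) only [strandPerm_of_lt, Prod.map_apply, map_mul, sh_σ, Nat.add_sub_cancel]
  · simp only [strandPerm_left, Prod.map_apply]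
  · simp only [strandPerm_right, Prod.map_apply]
  · simp (disch := omega) only [strandPerm_of_gt, Prod.map_apply, map_mul, sh_σ]

theorem strandAction_sh_succ (β : Binf) (x : ℕ × Binf) :
    strandAction (sh β) (x.map (· + 1) sh) = (strandAction β x).map (· + 1) sh := by
  have hsemi : Semiconj (Prod.map (· + 1) sh) (strandAction β) (strandAction.comp sh β) := by
    refine semiconj_of_closure_eq_top (PresentedGroup.closure_range_of braidRels) ?_ β
    rintro _ ⟨i, rfl⟩ x
    change (strandAction (σ i) x).map (· + 1) sh = strandAction (sh (σ i)) (x.map (· + 1) sh)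
    rw [sh_σ, strandAction_σ, strandAction_σ, strandPerm_succ]
  exact (hsemi x).symm

/-- `β` lies in the image of the shift endomorphism iff `sh β`
commutes with `σ₁`. -/
theorem mem_image_sh_iff (β : Binf) :
    (∃ γ : Binf, sh γ = β) ↔ sh β * σ 0 = σ 0 * sh β := by
  constructor
  · rintro ⟨γ, rfl⟩
    exact commute_sh_sh_σ_zero γ
  · intro hcomm
    have hdelete : (strandAction β (0, 1)).map (· + 1) sh = (1, β) := calc
      _ = strandAction (sh β) (1, 1) := by
          simpa using (strandAction_sh_succ β (0, 1)).symm
      _ = strandAction (sh β * σ 0) (0, 1) := by simp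
      _ = strandAction (σ 0 * sh β) (0, 1) := by rw [hcomm]
      _ = (1, β) := by simp [strandAction_sh_zero]
    exact ⟨(strandAction β (0, 1)).2, congrArg Prod.snd hdelete⟩
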